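/- Let d ≥ 1, let D be a real symmetric positive definite d×d matrix, let N ≥ 0, and for each t > 0 let p_t : ℤᵈ → [0,∞) satisfy ∑_{x} p_t(x) = N and ∑_{x} e^{λ‖x‖₁} p_t(x) < ∞ for every λ ≥ 0, so that M_t(z) = ∑_{x ∈ ℤᵈ} exp( i ∑_j z_j x_j ) p_t(x) defines an entire function of z ∈ ℂᵈ. Assume that for every compact K ⊂ ℂᵈ, sup_{z ∈ K} | M_t(z/√t) − N·exp( −(1/2) ∑_{i,j} D_{ij} z_i z_j ) | → 0 as t → ∞. Then for every positive integer n, lim_{t→∞} t^{−n} ∑_{x ∈ ℤᵈ} ‖x‖₂^{2n} p_t(x) = N · (2π)^{−d/2} (det D)^{−1/2} ∫_{ℝᵈ} ‖x‖₂^{2n} exp( −(1/2) ⟨x, D⁻¹ x⟩ ) dx. -/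

import Mathlib

open MeasureTheory Filter

/-- The ℓ¹ norm `‖x‖₁ = ∑ i, |x i|` of `x ∈ ℤᵈ`. -/
def normOne {d : ℕ} (x : Fin d → ℤ) : ℝ := ∑ i, |(x i : ℝ)|

/-!
Evaluated at real points, the hypothesis is convergence of characteristic functions, so by Lévy's
theorem the laws of `x / √t` under `p t / N` converge weakly to the centred Gaussian measure with
covariance `D`.  Evaluated at purely imaginary points, it says that the exponential moments
converge, and in particular stay bounded.  Since `exp ‖y‖` is dominated by the sum of the `2ᵈ`
exponentials `exp ⟪ε, y⟫` over sign vectors `ε`, every moment is then bounded uniformly in `t`,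
hence the moments are uniformly integrable and converge along with the laws.
-/

open ProbabilityTheory Real Topology WithLp
open scoped Matrix RealInnerProductSpace Nat

section WeakConvergence

variable {T E : Type*} {l : Filter T}

theorem abs_sub_clamp_le_sq_div {R : ℝ} (hR : 0 < R) (a : ℝ) :
    |a - max (-R) (min a R)| ≤ a ^ 2 / R := by
  rw [le_div_iff₀ hR]
  rcases le_total a R with ha | ha
  · rcases le_total (-R) a with ha' | ha'
    · simp only [min_eq_left ha, max_eq_right ha', sub_self, abs_zero, zero_mul]
      positivity
    · rw [min_eq_left ha, max_eq_left ha', abs_of_nonpos (by linarith)]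
      nlinarith [sq_nonneg (a + R)]
  · rw [min_eq_right ha, max_eq_right (by linarith), abs_of_nonneg (by linarith)]
    nlinarith [sq_nonneg (a - R)]

theorem abs_integral_sub_integral_clamp_le [MeasurableSpace E] {ν : Measure E} [IsFiniteMeasure ν]
    {f : E → ℝ} (hf : AEStronglyMeasurable f ν) (hf2 : Integrable (fun x ↦ f x ^ 2) ν)
    {R : ℝ} (hR : 0 < R) :
    |∫ x, f x ∂ν - ∫ x, max (-R) (min (f x) R) ∂ν| ≤ (∫ x, f x ^ 2 ∂ν) / R := by
  have hf1 : Integrable f ν := ((memLp_two_iff_integrable_sq hf).2 hf2).integrable one_le_two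
  have hclamp : Integrable (fun x ↦ max (-R) (min (f x) R)) ν :=
    (integrable_const _).sup (hf1.inf (integrable_const _))
  rw [← integral_sub hf1 hclamp, ← integral_div]
  rw [← Real.norm_eq_abs]
  exact norm_integral_le_of_norm_le (hf2.div_const R)
    (ae_of_all _ fun x ↦ abs_sub_clamp_le_sq_div hR (f x))

theorem tendsto_integral_clamp [TopologicalSpace E] [MeasurableSpace E] [OpensMeasurableSpace E]
    {μ : T → ProbabilityMeasure E} {ν : ProbabilityMeasure E} (hμ : Tendsto μ l (𝓝 ν))
    {f : E → ℝ} (hf : Continuous f) {R : ℝ} (hR : 0 ≤ R) :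
    Tendsto (fun t ↦ ∫ x, max (-R) (min (f x) R) ∂(μ t : Measure E)) l
      (𝓝 (∫ x, max (-R) (min (f x) R) ∂(ν : Measure E))) :=
  ProbabilityMeasure.tendsto_iff_forall_integral_tendsto.1 hμ
    (.ofNormedAddCommGroup (fun x ↦ max (-R) (min (f x) R)) (by fun_prop) R fun x ↦
      abs_le.2 ⟨le_max_left _ _, max_le (by linarith) (min_le_right _ _)⟩)

theorem tendsto_integral_of_tendsto_of_integral_sq_le
    [TopologicalSpace E] [MeasurableSpace E] [OpensMeasurableSpace E]
    {μ : T → ProbabilityMeasure E} {ν : ProbabilityMeasure E} (hμ : Tendsto μ l (𝓝 ν))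
    {f : E → ℝ} (hf : Continuous f) {C : ℝ}
    (hμf : ∀ᶠ t in l, Integrable (fun x ↦ f x ^ 2) (μ t : Measure E) ∧
      ∫ x, f x ^ 2 ∂(μ t : Measure E) ≤ C)
    (hνf : Integrable (fun x ↦ f x ^ 2) (ν : Measure E)) :
    Tendsto (fun t ↦ ∫ x, f x ∂(μ t : Measure E)) l (𝓝 (∫ x, f x ∂(ν : Measure E))) := by
  rw [Metric.tendsto_nhds]
  intro ε hε
  have small (K : ℝ) : ∀ᶠ R : ℝ in atTop, K / R < ε / 3 :=
    (tendsto_const_nhds.div_atTop tendsto_id).eventually_lt_const (by positivity)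
  obtain ⟨R, hCR, hνR, hR⟩ := ((small C).and
    ((small (∫ x, f x ^ 2 ∂(ν : Measure E))).and (eventually_gt_atTop 0))).exists
  filter_upwards [hμf, Metric.tendsto_nhds.1 (tendsto_integral_clamp hμ hf hR.le) (ε / 3)
    (by positivity)] with t ⟨hint, hC⟩ hclamp
  have hμ_clamp :=
    abs_integral_sub_integral_clamp_le (ν := (μ t : Measure E)) hf.aestronglyMeasurable hint hR
  have hν_clamp :=
    abs_integral_sub_integral_clamp_le (ν := (ν : Measure E)) hf.aestronglyMeasurable hνf hR
  have hCt : (∫ x, f x ^ 2 ∂(μ t : Measure E)) / R ≤ C / R := by gcongr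
  rw [Real.dist_eq, abs_lt] at *
  rw [abs_le] at hμ_clamp hν_clamp
  constructor <;> linarith

end WeakConvergence

section ExponentialMoments

variable {T E : Type*} {l : Filter T} [NormedAddCommGroup E] [InnerProductSpace ℝ E]

theorem norm_le_sum_abs_inner {ι : Type*} [Fintype ι] (b : OrthonormalBasis ι ℝ E) (x : E) :
    ‖x‖ ≤ ∑ i, |⟪b i, x⟫| :=
  calc ‖x‖ = ‖∑ i, ⟪b i, x⟫ • b i‖ := by rw [b.sum_repr']
    _ ≤ ∑ i, ‖⟪b i, x⟫ • b i‖ := norm_sum_le _ _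
    _ = ∑ i, |⟪b i, x⟫| := by simp [norm_smul]

theorem exp_sum_abs_le_sum_signs {ι : Type*} [Fintype ι] [DecidableEq ι] (a : ι → ℝ) :
    exp (∑ i, |a i|) ≤ ∑ ε : ι → ℤˣ, exp (∑ i, ((ε i : ℤ) : ℝ) * a i) := by
  have exp_abs_le (r : ℝ) : exp |r| ≤ ∑ s : ℤˣ, exp (((s : ℤ) : ℝ) * r) := by
    rcases abs_choice r with h | h <;> simp [h, exp_nonneg]
  calc exp (∑ i, |a i|) = ∏ i, exp |a i| := exp_sum _ _
    _ ≤ ∏ i, ∑ s : ℤˣ, exp (((s : ℤ) : ℝ) * a i) :=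
      Finset.prod_le_prod (fun _ _ ↦ exp_nonneg _) fun i _ ↦ exp_abs_le (a i)
    _ = ∑ ε : ι → ℤˣ, exp (∑ i, ((ε i : ℤ) : ℝ) * a i) := by
      simp only [Fintype.prod_sum, exp_sum]

variable [FiniteDimensional ℝ E]

variable (E) in
theorem exists_exp_norm_le_sum_exp_inner {c : ℝ} (hc : 0 ≤ c) :
    ∃ θ : (Fin (Module.finrank ℝ E) → ℤˣ) → E, ∀ x, exp (c * ‖x‖) ≤ ∑ ε, exp ⟪θ ε, x⟫ := by
  let b := stdOrthonormalBasis ℝ E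
  let θ (ε : Fin (Module.finrank ℝ E) → ℤˣ) : E := ∑ i, ((ε i : ℤ) : ℝ) • c • b i
  have inner_θ (ε) (x : E) : ⟪θ ε, x⟫ = ∑ i, ((ε i : ℤ) : ℝ) * (c * ⟪b i, x⟫) := by
    simp only [θ, sum_inner, real_inner_smul_left]
  refine ⟨θ, fun x ↦ ?_⟩
  calc exp (c * ‖x‖) ≤ exp (∑ i, |c * ⟪b i, x⟫|) := by
        simp only [abs_mul, abs_of_nonneg hc, ← Finset.mul_sum]
        gcongr
        exact norm_le_sum_abs_inner b x
    _ ≤ ∑ ε, exp ⟪θ ε, x⟫ := by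
        simpa only [inner_θ] using exp_sum_abs_le_sum_signs fun i ↦ c * ⟪b i, x⟫

variable [MeasurableSpace E] [BorelSpace E]

theorem exists_eventually_integral_exp_norm_le {μ : T → Measure E}
    (hμ : ∀ θ : E, ∃ L ≠ 0, Tendsto (fun t ↦ ∫ x, exp ⟪θ, x⟫ ∂μ t) l (𝓝 L))
    {c : ℝ} (hc : 0 ≤ c) :
    ∃ C, ∀ᶠ t in l, Integrable (fun x ↦ exp (c * ‖x‖)) (μ t) ∧
      ∫ x, exp (c * ‖x‖) ∂μ t ≤ C := by
  obtain ⟨θ, hθ⟩ := exists_exp_norm_le_sum_exp_inner E hc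
  choose L hL0 hL using hμ
  -- A nonzero Bochner integral can only come from an integrable function.
  have hint : ∀ᶠ t in l, ∀ ε, Integrable (fun x ↦ exp ⟪θ ε, x⟫) (μ t) :=
    eventually_all.2 fun ε ↦
      ((hL (θ ε)).eventually_ne (hL0 (θ ε))).mono fun t ht ↦ .of_integral_ne_zero ht
  have hsum : ∀ᶠ t in l, ∑ ε, ∫ x, exp ⟪θ ε, x⟫ ∂μ t ≤ ∑ ε, L (θ ε) + 1 :=
    (tendsto_finsetSum _ fun ε _ ↦ hL (θ ε)).eventually_le_const (lt_add_one _)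
  refine ⟨∑ ε, L (θ ε) + 1, ?_⟩
  filter_upwards [hint, hsum] with t hint hsum
  have hdom : Integrable (fun x ↦ ∑ ε, exp ⟪θ ε, x⟫) (μ t) :=
    integrable_finsetSum _ fun ε _ ↦ hint ε
  have hexp : Integrable (fun x ↦ exp (c * ‖x‖)) (μ t) :=
    hdom.mono' (by fun_prop) (ae_of_all _ fun x ↦ by simpa using hθ x)
  refine ⟨hexp, ?_⟩
  calc ∫ x, exp (c * ‖x‖) ∂μ t ≤ ∫ x, ∑ ε, exp ⟪θ ε, x⟫ ∂μ t := integral_mono hexp hdom hθ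
    _ = ∑ ε, ∫ x, exp ⟪θ ε, x⟫ ∂μ t := integral_finsetSum _ fun ε _ ↦ hint ε
    _ ≤ ∑ ε, L (θ ε) + 1 := hsum

theorem tendsto_integral_of_tendsto_charFun_of_tendsto_integral_exp_inner
    [l.IsCountablyGenerated] {μ : T → ProbabilityMeasure E} {ν : ProbabilityMeasure E}
    (hchar : ∀ θ : E, Tendsto (fun t ↦ charFun (μ t : Measure E) θ) l
      (𝓝 (charFun (ν : Measure E) θ)))
    (hexp : ∀ θ : E, ∃ L ≠ 0, Tendsto (fun t ↦ ∫ x, exp ⟪θ, x⟫ ∂(μ t : Measure E)) l (𝓝 L))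
    {f : E → ℝ} (hf : Continuous f) {C c : ℝ} (hc : 0 ≤ c)
    (hfexp : ∀ x, |f x| ≤ C * exp (c * ‖x‖))
    (hν : Integrable (fun x ↦ f x ^ 2) (ν : Measure E)) :
    Tendsto (fun t ↦ ∫ x, f x ∂(μ t : Measure E)) l (𝓝 (∫ x, f x ∂(ν : Measure E))) := by
  have hweak : Tendsto μ l (𝓝 ν) := tendsto_of_seq_tendsto fun u hu ↦
    ProbabilityMeasure.tendsto_of_tendsto_charFun fun θ ↦ (hchar θ).comp hu
  have hsq (x : E) : f x ^ 2 ≤ C ^ 2 * exp (2 * c * ‖x‖) :=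
    calc f x ^ 2 = |f x| ^ 2 := (sq_abs _).symm
      _ ≤ (C * exp (c * ‖x‖)) ^ 2 := by gcongr; exact hfexp x
      _ = C ^ 2 * exp (2 * c * ‖x‖) := by rw [mul_pow, ← exp_nat_mul]; push_cast; ring_nf
  obtain ⟨B, hB⟩ := exists_eventually_integral_exp_norm_le hexp (mul_nonneg zero_le_two hc)
  refine tendsto_integral_of_tendsto_of_integral_sq_le hweak hf (C := C ^ 2 * B) ?_ hν
  filter_upwards [hB] with t ⟨hint, hle⟩
  have hfint : Integrable (fun x ↦ f x ^ 2) (μ t : Measure E) :=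
    (hint.const_mul (C ^ 2)).mono' (by fun_prop) (ae_of_all _ fun x ↦ by simpa using hsq x)
  refine ⟨hfint, ?_⟩
  calc ∫ x, f x ^ 2 ∂(μ t : Measure E)
      ≤ ∫ x, C ^ 2 * exp (2 * c * ‖x‖) ∂(μ t : Measure E) :=
        integral_mono hfint (hint.const_mul _) hsq
    _ = C ^ 2 * ∫ x, exp (2 * c * ‖x‖) ∂(μ t : Measure E) := integral_const_mul _ _
    _ ≤ C ^ 2 * B := by gcongr

end ExponentialMoments

section GaussianDensity

variable {ι : Type*} [Fintype ι]

theorem pi_withDensity_ofReal {X : ι → Type*} [∀ i, MeasurableSpace (X i)]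
    (μ : ∀ i, Measure (X i)) [∀ i, SigmaFinite (μ i)] {g : ∀ i, X i → ℝ}
    (hg : ∀ i, Integrable (g i) (μ i)) (hg0 : ∀ i x, 0 ≤ g i x) :
    Measure.pi (fun i ↦ (μ i).withDensity fun x ↦ ENNReal.ofReal (g i x)) =
      (Measure.pi μ).withDensity fun x ↦ ENNReal.ofReal (∏ i, g i (x i)) := by
  have (i : ι) : IsFiniteMeasure ((μ i).withDensity fun x ↦ ENNReal.ofReal (g i x)) :=
    isFiniteMeasure_withDensity_ofReal (hg i).2
  refine Measure.pi_eq fun s hs ↦ ?_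
  have hprod : Integrable (fun x ↦ ∏ i, g i (x i)) (Measure.pi fun i ↦ (μ i).restrict (s i)) :=
    Integrable.fintype_prod_dep fun i ↦ (hg i).restrict
  calc ((Measure.pi μ).withDensity fun x ↦ ENNReal.ofReal (∏ i, g i (x i))) (Set.univ.pi s)
      = ∫⁻ x, ENNReal.ofReal (∏ i, g i (x i)) ∂Measure.pi fun i ↦ (μ i).restrict (s i) := by
        rw [withDensity_apply _ (MeasurableSet.univ_pi hs), Measure.restrict_pi_pi]
    _ = ENNReal.ofReal (∏ i, ∫ x in s i, g i x ∂μ i) := by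
        rw [← ofReal_integral_eq_lintegral_ofReal hprod
          (ae_of_all _ fun x ↦ Finset.prod_nonneg fun i _ ↦ hg0 i (x i)),
          integral_fintype_prod_eq_prod]
    _ = ∏ i, ((μ i).withDensity fun x ↦ ENNReal.ofReal (g i x)) (s i) := by
        rw [ENNReal.ofReal_prod_of_nonneg fun i _ ↦ integral_nonneg (hg0 i)]
        refine Finset.prod_congr rfl fun i _ ↦ ?_
        rw [withDensity_apply _ (hs i), ofReal_integral_eq_lintegral_ofReal (hg i).restrict
          (ae_of_all _ (hg0 i))]

theorem prod_gaussianPDFReal_zero_one (x : ι → ℝ) :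
    ∏ i, gaussianPDFReal 0 1 (x i) =
      (2 * π) ^ (-(Fintype.card ι : ℝ) / 2) * exp (-(1 / 2) * (x ⬝ᵥ x)) := by
  have hconst : (√(2 * π))⁻¹ ^ Fintype.card ι = (2 * π) ^ (-(Fintype.card ι : ℝ) / 2) := by
    rw [sqrt_eq_rpow, ← rpow_neg (by positivity), ← rpow_mul_natCast (by positivity)]
    ring_nf
  simp only [gaussianPDFReal, NNReal.coe_one, mul_one, sub_zero, Finset.prod_mul_distrib,
    Finset.prod_const, Finset.card_univ, hconst, ← exp_sum, dotProduct, Finset.mul_sum]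
  ring_nf

variable {F : Type*} [NormedAddCommGroup F] [NormedSpace ℝ F]

theorem integral_stdGaussian (f : EuclideanSpace ℝ ι → F) :
    ∫ x, f x ∂stdGaussian (EuclideanSpace ℝ ι) =
      (2 * π) ^ (-(Fintype.card ι : ℝ) / 2) •
        ∫ x : ι → ℝ, exp (-(1 / 2) * (x ⬝ᵥ x)) • f (toLp 2 x) := by
  have hpi : Measure.pi (fun _ : ι ↦ gaussianReal 0 1) = (volume : Measure (ι → ℝ)).withDensity
      fun x ↦ ENNReal.ofReal (∏ i, gaussianPDFReal 0 1 (x i)) := by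
    simp only [gaussianReal_of_var_ne_zero _ one_ne_zero]
    exact pi_withDensity_ofReal (fun _ ↦ volume) (fun _ ↦ integrable_gaussianPDFReal 0 1)
      fun _ ↦ gaussianPDFReal_nonneg 0 1
  rw [← map_pi_eq_stdGaussian, ← MeasurableEquiv.coe_toLp, integral_map_equiv, hpi,
    integral_withDensity_eq_integral_toReal_smul (by fun_prop) (by simp), ← integral_smul]
  congr with x
  rw [ENNReal.toReal_ofReal (Finset.prod_nonneg fun i _ ↦ gaussianPDFReal_nonneg _ _ _),
    prod_gaussianPDFReal_zero_one, mul_smul]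

variable [DecidableEq ι]

theorem integral_comp_mulVec {A : Matrix ι ι ℝ} (hA : A.det ≠ 0) (f : (ι → ℝ) → F) :
    ∫ x, f (A *ᵥ x) = |A.det|⁻¹ • ∫ x, f x := by
  have hinj : Function.Injective (Matrix.toLin' A) :=
    Matrix.mulVec_injective_of_isUnit ((Matrix.isUnit_iff_isUnit_det A).2 hA.isUnit)
  have hemb : MeasurableEmbedding (Matrix.toLin' A) :=
    (LinearMap.isClosedEmbedding_of_injective (LinearMap.ker_eq_bot.2 hinj)).measurableEmbedding
  calc ∫ x, f (A *ᵥ x) = ∫ x, f x ∂Measure.map (Matrix.toLin' A) volume :=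
        (hemb.integral_map f).symm
    _ = |A.det|⁻¹ • ∫ x, f x := by
        rw [map_matrix_volume_pi_eq_smul_volume_pi hA, integral_smul_measure,
          ENNReal.toReal_ofReal (abs_nonneg _), abs_inv]

theorem mulVec_dotProduct_inv_mul_self_mulVec {A : Matrix ι ι ℝ} (hA : A.det ≠ 0)
    (hsymm : A.IsSymm) (x : ι → ℝ) :
    A *ᵥ x ⬝ᵥ (A * A)⁻¹ *ᵥ A *ᵥ x = x ⬝ᵥ x := by
  have hAinv : (A * A)⁻¹ * A = A⁻¹ := by
    rw [Matrix.mul_inv_rev, Matrix.mul_assoc, Matrix.nonsing_inv_mul A hA.isUnit, mul_one]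
  calc A *ᵥ x ⬝ᵥ (A * A)⁻¹ *ᵥ A *ᵥ x = x ᵥ* Aᵀ ⬝ᵥ A⁻¹ *ᵥ x := by
        rw [Matrix.mulVec_mulVec, hAinv, Matrix.vecMul_transpose]
    _ = x ⬝ᵥ x := by
        rw [hsymm.eq, ← Matrix.dotProduct_mulVec, Matrix.mulVec_mulVec,
          Matrix.mul_nonsing_inv A hA.isUnit, Matrix.one_mulVec]

open scoped MatrixOrder Matrix.Norms.L2Operator in
theorem integral_multivariateGaussian (m : EuclideanSpace ℝ ι) {S : Matrix ι ι ℝ} (hS : S.PosDef)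
    (f : EuclideanSpace ℝ ι → F) :
    ∫ x, f x ∂multivariateGaussian m S =
      ((2 * π) ^ (-(Fintype.card ι : ℝ) / 2) * (√S.det)⁻¹) •
        ∫ x : ι → ℝ, exp (-(1 / 2) * (x ⬝ᵥ S⁻¹ *ᵥ x)) • f (m + toLp 2 x) := by
  set A := CFC.sqrt S with hA
  have hAA : A * A = S := CFC.sqrt_mul_sqrt_self S hS.posSemidef.nonneg
  have hAsymm : A.IsSymm := (CFC.sqrt_nonneg S).isSelfAdjoint
  have hdetA : A.det = √S.det := hS.posSemidef.det_sqrt.trans RCLike.sqrt_real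
  have hdetA_pos : 0 < A.det := hdetA ▸ sqrt_pos.2 hS.det_pos
  have hinj : Function.Injective (Matrix.toEuclideanCLM (𝕜 := ℝ) A) := fun x y hxy ↦
    ofLp_injective 2 <| Matrix.mulVec_injective_of_isUnit
      ((Matrix.isUnit_iff_isUnit_det A).2 hdetA_pos.ne'.isUnit) <| by
        simpa only [Matrix.ofLp_toEuclideanCLM] using congrArg ofLp hxy
  have hemb : MeasurableEmbedding fun x ↦ m + Matrix.toEuclideanCLM (𝕜 := ℝ) A x :=
    (measurableEmbedding_addLeft m).comp
      (LinearMap.isClosedEmbedding_of_injective (LinearMap.ker_eq_bot.2 hinj)).measurableEmbedding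
  calc ∫ x, f x ∂multivariateGaussian m S
      = (2 * π) ^ (-(Fintype.card ι : ℝ) / 2) •
          ∫ x : ι → ℝ, exp (-(1 / 2) * (x ⬝ᵥ x)) • f (m + toLp 2 (A *ᵥ x)) := by
        rw [multivariateGaussian, hemb.integral_map, integral_stdGaussian]
        simp only [Matrix.toEuclideanCLM_toLp, hA]
    _ = (2 * π) ^ (-(Fintype.card ι : ℝ) / 2) • ∫ x : ι → ℝ,
          exp (-(1 / 2) * (A *ᵥ x ⬝ᵥ S⁻¹ *ᵥ A *ᵥ x)) • f (m + toLp 2 (A *ᵥ x)) := by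
        simp only [← hAA, mulVec_dotProduct_inv_mul_self_mulVec hdetA_pos.ne' hAsymm]
    _ = _ := by
        rw [integral_comp_mulVec hdetA_pos.ne'
          fun y ↦ exp (-(1 / 2) * (y ⬝ᵥ S⁻¹ *ᵥ y)) • f (m + toLp 2 y),
          abs_of_pos hdetA_pos, hdetA, mul_smul]

theorem integral_norm_pow_multivariateGaussian_zero {S : Matrix ι ι ℝ} (hS : S.PosDef) (k : ℕ) :
    ∫ x, ‖x‖ ^ k ∂multivariateGaussian 0 S =
      (2 * π) ^ (-(Fintype.card ι : ℝ) / 2) * (√S.det)⁻¹ *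
        ∫ x : ι → ℝ, √(∑ i, x i ^ 2) ^ k * exp (-(1 / 2) * (x ⬝ᵥ S⁻¹ *ᵥ x)) := by
  simp only [integral_multivariateGaussian 0 hS, zero_add, EuclideanSpace.norm_eq,
    Real.norm_eq_abs, sq_abs, smul_eq_mul, mul_comm]

theorem integrable_norm_pow_multivariateGaussian (m : EuclideanSpace ℝ ι) (S : Matrix ι ι ℝ)
    (k : ℕ) : Integrable (fun x ↦ ‖x‖ ^ k) (multivariateGaussian m S) :=
  (IsGaussian.memLp_id (multivariateGaussian m S) k (ENNReal.natCast_ne_top k)).integrable_norm_pow'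

end GaussianDensity

section FourierLaplace

variable {T ι : Type*} {l : Filter T} [Fintype ι]

/-- The Fourier–Laplace transform of a measure on `ℝ^ι`, as a function of a complex frequency `z`.
It is the characteristic function at real `z` and the moment generating function at purely
imaginary `z`.  If the integrand is not integrable, then the value is `0`. -/
noncomputable def fourierLaplace (μ : Measure (EuclideanSpace ℝ ι)) (z : ι → ℂ) : ℂ :=
  ∫ y, Complex.exp (Complex.I * ∑ j, z j * y j) ∂μ

theorem fourierLaplace_ofReal (μ : Measure (EuclideanSpace ℝ ι)) (θ : EuclideanSpace ℝ ι) :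
    fourierLaplace μ (fun j ↦ θ j) = charFun μ θ := by
  simp only [fourierLaplace, charFun_apply, PiLp.inner_apply, RCLike.inner_apply, conj_trivial,
    Complex.ofReal_sum, Complex.ofReal_mul, mul_comm]

theorem fourierLaplace_neg_I_mul (μ : Measure (EuclideanSpace ℝ ι)) (θ : EuclideanSpace ℝ ι) :
    fourierLaplace μ (fun j ↦ -Complex.I * θ j) = ∫ y, exp ⟪θ, y⟫ ∂μ := by
  rw [← integral_complex_ofReal, fourierLaplace]
  congr with y
  have hI : Complex.I * ∑ j, -Complex.I * θ j * y j = ∑ j, (θ j : ℂ) * y j := by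
    rw [Finset.mul_sum]
    exact Finset.sum_congr rfl fun j _ ↦ by linear_combination (-(θ j : ℂ) * y j) * Complex.I_sq
  rw [hI]
  simp [PiLp.inner_apply, mul_comm]

theorem tendsto_integral_exp_inner_of_tendsto_fourierLaplace
    {μ : T → Measure (EuclideanSpace ℝ ι)} {S : Matrix ι ι ℝ} {θ : EuclideanSpace ℝ ι}
    (hμ : Tendsto (fun t ↦ fourierLaplace (μ t) fun j ↦ -Complex.I * θ j) l
      (𝓝 (Complex.exp
        (-(1 / 2) * ∑ i, ∑ j, (S i j : ℂ) * (-Complex.I * θ i) * (-Complex.I * θ j))))) :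
    Tendsto (fun t ↦ ∫ y, exp ⟪θ, y⟫ ∂μ t) l
      (𝓝 (exp (1 / 2 * ∑ i, ∑ j, S i j * θ i * θ j))) := by
  have hI (a b c : ℂ) : a * (-Complex.I * b) * (-Complex.I * c) = -(a * b * c) := by
    linear_combination a * b * c * Complex.I_sq
  simp only [fourierLaplace_neg_I_mul, hI, Finset.sum_neg_distrib, neg_mul_neg] at hμ
  rw [← tendsto_ofReal_iff]
  push_cast
  exact hμ

variable [DecidableEq ι]

theorem charFun_multivariateGaussian_zero {S : Matrix ι ι ℝ} (hS : S.PosSemidef)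
    (θ : EuclideanSpace ℝ ι) :
    charFun (multivariateGaussian 0 S) θ =
      Complex.exp (-(1 / 2) * ∑ i, ∑ j, (S i j : ℂ) * θ i * θ j) := by
  rw [charFun_multivariateGaussian hS]
  simp only [inner_zero_right, dotProduct, Matrix.mulVec, Finset.mul_sum]
  push_cast
  congr 1
  simp only [zero_mul, zero_sub, ← Finset.sum_neg_distrib, Finset.sum_div]
  exact Finset.sum_congr rfl fun i _ ↦ Finset.sum_congr rfl fun j _ ↦ by ring

theorem tendsto_integral_norm_pow_of_tendsto_fourierLaplace [l.IsCountablyGenerated]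
    {μ : T → ProbabilityMeasure (EuclideanSpace ℝ ι)} {S : Matrix ι ι ℝ} (hS : S.PosSemidef)
    (hμ : ∀ z : ι → ℂ, Tendsto (fun t ↦ fourierLaplace (μ t : Measure (EuclideanSpace ℝ ι)) z) l
      (𝓝 (Complex.exp (-(1 / 2) * ∑ i, ∑ j, (S i j : ℂ) * z i * z j)))) (k : ℕ) :
    Tendsto (fun t ↦ ∫ y, ‖y‖ ^ k ∂(μ t : Measure (EuclideanSpace ℝ ι))) l
      (𝓝 (∫ y, ‖y‖ ^ k ∂multivariateGaussian 0 S)) := by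
  let ν : ProbabilityMeasure (EuclideanSpace ℝ ι) := ⟨multivariateGaussian 0 S, inferInstance⟩
  refine tendsto_integral_of_tendsto_charFun_of_tendsto_integral_exp_inner (ν := ν)
    (C := k !) (c := 1) (fun θ ↦ ?_) (fun θ ↦ ?_) (by fun_prop) zero_le_one (fun y ↦ ?_) ?_
  · change Tendsto _ l (𝓝 (charFun (multivariateGaussian 0 S) θ))
    simpa only [fourierLaplace_ofReal, ← charFun_multivariateGaussian_zero hS] using hμ fun j ↦ θ j
  · exact ⟨_, (exp_pos _).ne', tendsto_integral_exp_inner_of_tendsto_fourierLaplace (hμ _)⟩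
  · rw [abs_of_nonneg (by positivity), one_mul, ← div_le_iff₀' (by positivity)]
    exact pow_div_factorial_le_exp _ (norm_nonneg y) k
  · change Integrable _ (multivariateGaussian 0 S)
    simpa only [← pow_mul] using integrable_norm_pow_multivariateGaussian 0 S (k * 2)

end FourierLaplace

section LatticeLaw

variable {ι : Type*}

/-- The image of the lattice point `x` under the diffusive scaling `x ↦ x / √t`. -/
noncomputable def diffusiveScaling (t : ℝ) (x : ι → ℤ) : EuclideanSpace ℝ ι :=
  toLp 2 fun i ↦ x i / √t

/-- The law of `x / √t` when the lattice point `x` is drawn with probability `w x / N`; it is a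
probability measure when `w` is nonnegative with sum `N > 0`. -/
noncomputable def scaledLaw (w : (ι → ℤ) → ℝ) (N t : ℝ) : Measure (EuclideanSpace ℝ ι) :=
  .sum fun x ↦ ENNReal.ofReal (w x / N) • .dirac (diffusiveScaling t x)

variable {w : (ι → ℤ) → ℝ} {N : ℝ}

theorem isProbabilityMeasure_scaledLaw (hw : ∀ x, 0 ≤ w x) (hN : 0 < N) (hwN : HasSum w N)
    (t : ℝ) : IsProbabilityMeasure (scaledLaw w N t) := by
  have hsum : HasSum (fun x ↦ w x / N) 1 := div_self hN.ne' ▸ hwN.div_const N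
  constructor
  simp only [scaledLaw, Measure.sum_apply _ MeasurableSet.univ, Measure.smul_apply, measure_univ,
    smul_eq_mul, mul_one]
  rw [← ENNReal.ofReal_tsum_of_nonneg (fun x ↦ div_nonneg (hw x) hN.le) hsum.summable,
    hsum.tsum_eq, ENNReal.ofReal_one]

theorem integral_scaledLaw [Finite ι] {F : Type*} [NormedAddCommGroup F] [NormedSpace ℝ F]
    [FiniteDimensional ℝ F] (hw : ∀ x, 0 ≤ w x) (hN : 0 ≤ N) (t : ℝ)
    (f : EuclideanSpace ℝ ι → F) :
    ∫ y, f y ∂scaledLaw w N t = ∑' x, (w x / N) • f (diffusiveScaling t x) := by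
  simp only [scaledLaw, integral_sum_dirac fun _ ↦ ENNReal.ofReal_ne_top,
    ENNReal.toReal_ofReal (div_nonneg (hw _) hN)]

variable [Fintype ι]

theorem norm_diffusiveScaling (t : ℝ) (x : ι → ℤ) :
    ‖diffusiveScaling t x‖ = √(∑ i, (x i : ℝ) ^ 2) / √t := by
  simp only [EuclideanSpace.norm_eq, diffusiveScaling, Real.norm_eq_abs, sq_abs, div_pow,
    ← Finset.sum_div]
  rw [sqrt_div' _ (sq_nonneg _), sqrt_sq (sqrt_nonneg t)]

theorem fourierLaplace_scaledLaw (hw : ∀ x, 0 ≤ w x) (hN : 0 ≤ N) (t : ℝ) (z : ι → ℂ) :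
    fourierLaplace (scaledLaw w N t) z =
      (∑' x : ι → ℤ, Complex.exp (Complex.I * ∑ j, z j / (√t : ℂ) * (x j : ℂ)) * (w x : ℂ)) /
        N := by
  rw [fourierLaplace, integral_scaledLaw hw hN, ← tsum_div_const]
  congr with x
  simp only [diffusiveScaling, Complex.real_smul]
  push_cast
  simp only [div_mul_eq_mul_div, mul_div_assoc']
  ring

theorem integral_norm_pow_scaledLaw (hw : ∀ x, 0 ≤ w x) (hN : 0 ≤ N) (t : ℝ) (k : ℕ) :
    ∫ y, ‖y‖ ^ k ∂scaledLaw w N t =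
      (∑' x : ι → ℤ, √(∑ i, (x i : ℝ) ^ 2) ^ k * w x) / √t ^ k / N := by
  rw [integral_scaledLaw hw hN, ← tsum_div_const, ← tsum_div_const]
  congr with x
  rw [norm_diffusiveScaling, div_pow, smul_eq_mul]
  ring

end LatticeLaw

theorem stmt_13_general {ι : Type*} [Fintype ι] [DecidableEq ι]
    {D : Matrix ι ι ℝ} (hD : D.PosDef) {N : ℝ} {p : ℝ → (ι → ℤ) → ℝ}
    (hp0 : ∀ t : ℝ, 0 < t → ∀ x, 0 ≤ p t x) (hpN : ∀ t : ℝ, 0 < t → HasSum (p t) N)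
    {M : ℝ → (ι → ℂ) → ℂ}
    (hM : ∀ (t : ℝ) (z : ι → ℂ),
      M t z = ∑' x : ι → ℤ, Complex.exp (Complex.I * ∑ j, z j * (x j : ℂ)) * (p t x : ℂ))
    (hconv : ∀ z : ι → ℂ, Tendsto (fun t ↦ M t fun i ↦ z i / (√t : ℂ)) atTop
      (𝓝 (N * Complex.exp (-(1 / 2) * ∑ i, ∑ j, (D i j : ℂ) * z i * z j)))) (k : ℕ) :
    Tendsto (fun t ↦ (∑' x : ι → ℤ, √(∑ i, (x i : ℝ) ^ 2) ^ k * p t x) / √t ^ k) atTop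
      (𝓝 (N * (2 * π) ^ (-(Fintype.card ι : ℝ) / 2) * (√D.det)⁻¹ *
        ∫ x : ι → ℝ, √(∑ i, x i ^ 2) ^ k * exp (-(1 / 2) * (x ⬝ᵥ D⁻¹ *ᵥ x)))) := by
  have hN : 0 ≤ N := (hpN 1 one_pos).nonneg (hp0 1 one_pos)
  rcases hN.eq_or_lt with rfl | hN
  · refine Tendsto.congr' (f₁ := fun _ ↦ 0) ?_ (by simp)
    filter_upwards [eventually_gt_atTop 0] with t ht
    simp [(hasSum_zero_iff_of_nonneg (hp0 t ht)).1 (hpN t ht)]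
  let μ (t : Set.Ioi (0 : ℝ)) : ProbabilityMeasure (EuclideanSpace ℝ ι) :=
    ⟨scaledLaw (p t) N t, isProbabilityMeasure_scaledLaw (hp0 t t.2) hN (hpN t t.2) t⟩
  have : (atTop : Filter (Set.Ioi (0 : ℝ))).IsCountablyGenerated := by
    rw [atTop_Ioi_eq]
    infer_instance
  have hμ (z : ι → ℂ) :
      Tendsto (fun t ↦ fourierLaplace (μ t : Measure (EuclideanSpace ℝ ι)) z) atTop
        (𝓝 (Complex.exp (-(1 / 2) * ∑ i, ∑ j, (D i j : ℂ) * z i * z j))) := by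
    have hdiv := ((tendsto_comp_val_Ioi_atTop (a := 0)).2 (hconv z)).div_const (N : ℂ)
    rw [mul_div_cancel_left₀ _ (Complex.ofReal_ne_zero.2 hN.ne')] at hdiv
    refine hdiv.congr fun t ↦ ?_
    rw [hM, ← fourierLaplace_scaledLaw (hp0 t t.2) hN.le]
    rfl
  rw [← tendsto_comp_val_Ioi_atTop (a := 0), mul_assoc N, mul_assoc N,
    ← integral_norm_pow_multivariateGaussian_zero hD]
  refine ((tendsto_integral_norm_pow_of_tendsto_fourierLaplace hD.posSemidef hμ k).const_mul
    N).congr fun t ↦ ?_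
  change N * ∫ y, ‖y‖ ^ k ∂scaledLaw (p t) N t = _
  rw [integral_norm_pow_scaledLaw (hp0 t t.2) hN.le, mul_div_cancel₀ _ hN.ne']

/-- Diffusive scaling of all even moments: if the diffusively rescaled
characteristic functions `M_t(z/√t)` converge to `N e^{−½ z·Dz}` uniformly on compact subsets of
`ℂᵈ`, then for every `n ≥ 1`,
`t^{−n} ∑_x ‖x‖₂^{2n} p_t(x) → N (2π)^{−d/2} (det D)^{−1/2} ∫ ‖x‖₂^{2n} e^{−½⟨x,D⁻¹x⟩} dx`. -/
theorem stmt_13 {d : ℕ} (hd : 1 ≤ d)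
    (D : Matrix (Fin d) (Fin d) ℝ) (hDsymm : D.IsSymm) (hDpos : D.PosDef)
    (N : ℝ) (hN : 0 ≤ N)
    (p : ℝ → (Fin d → ℤ) → ℝ)
    (hp0 : ∀ t : ℝ, 0 < t → ∀ x, 0 ≤ p t x)
    (hpN : ∀ t : ℝ, 0 < t → HasSum (p t) N)
    (hpexp : ∀ t : ℝ, 0 < t → ∀ lam : ℝ, 0 ≤ lam →
      Summable (fun x : Fin d → ℤ => Real.exp (lam * normOne x) * p t x))
    (M : ℝ → (Fin d → ℂ) → ℂ)
    (hM : ∀ (t : ℝ) (z : Fin d → ℂ),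
      M t z = ∑' x : Fin d → ℤ,
        Complex.exp (Complex.I * ∑ j, z j * (x j : ℂ)) * (p t x : ℂ))
    (hconv : ∀ K : Set (Fin d → ℂ), IsCompact K →
      TendstoUniformlyOn
        (fun (t : ℝ) (z : Fin d → ℂ) => M t (fun i => z i / (Real.sqrt t : ℂ)))
        (fun z : Fin d → ℂ =>
          (N : ℂ) * Complex.exp (-(1 / 2) * ∑ i, ∑ j, (D i j : ℂ) * z i * z j))
        atTop K)
    (n : ℕ) (hn : 0 < n) :
    Tendsto
      (fun t : ℝ =>
        (∑' x : Fin d → ℤ, Real.sqrt (∑ i, ((x i : ℝ)) ^ 2) ^ (2 * n) * p t x) / t ^ n)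
      atTop
      (nhds (N * (2 * Real.pi) ^ (-(d : ℝ) / 2) * (Real.sqrt D.det)⁻¹ *
        ∫ x : Fin d → ℝ,
          Real.sqrt (∑ i, (x i) ^ 2) ^ (2 * n) *
            Real.exp (-(1 / 2) * ∑ i, x i * Matrix.mulVec D⁻¹ x i))) := by
  have hlim := stmt_13_general hDpos hp0 hpN hM
    (fun z ↦ (hconv {z} isCompact_singleton).tendsto_at rfl) (2 * n)
  rw [Fintype.card_fin] at hlim
  refine hlim.congr' ?_
  filter_upwards [eventually_gt_atTop 0] with t ht
  rw [pow_mul √t, sq_sqrt ht.le]
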